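/- Let K ⊆ ℂ be a number field and let f_1, …, f_d be entire functions. Assume that f_1 and f_2 are algebraically independent over K and have finite order of growth. Assume also that for each 1 ≤ i ≤ d there is a polynomial P_i ∈ K[X_1, …, X_d] such that the derivative f_i′ satisfies f_i′(z) = P_i(f_1(z), …, f_d(z)) for all z ∈ ℂ. Then the set S of w ∈ ℂ such that f_i(w) ∈ K for all 1 ≤ i ≤ d is finite. -/

import Mathlib

/-- `|f|_R = sup_{|z|=R} |f z|`. -/
noncomputable def SupOnCircle (f : ℂ → ℂ) (R : ℝ) : ℝ :=
  sSup ((fun z => ‖f z‖) '' {z : ℂ | ‖z‖ = R})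

/-- `f` has finite order of growth: for some `ρ ≥ 0` and every `ε > 0`,
`|f|_R ≤ exp(R^(ρ+ε))` for all sufficiently large `R`. -/
def HasFiniteOrderGrowth (f : ℂ → ℂ) : Prop :=
  ∃ ρ : ℝ, 0 ≤ ρ ∧ ∀ ε > (0 : ℝ), ∃ R₀ : ℝ, ∀ R ≥ R₀,
    SupOnCircle f R ≤ Real.exp (R ^ (ρ + ε))

open NumberField

section EntireFunctions

/-- The norm of a continuous function at a point is at most its supremum on the circle
through that point. -/
lemma norm_le_supOnCircle {f : ℂ → ℂ} (hf : Continuous f) (z : ℂ) :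
    ‖f z‖ ≤ SupOnCircle f ‖z‖ := by
  refine le_csSup ?_ ⟨z, rfl, rfl⟩
  have hcompact : IsCompact {w : ℂ | ‖w‖ = ‖z‖} := by
    simpa [Metric.sphere, dist_zero_right] using isCompact_sphere (0 : ℂ) ‖z‖
  exact (hcompact.image hf.norm).bddAbove

/-- A continuous function of finite order is bounded by `exp (‖z‖ ^ ρ)` for all large natural
exponents `ρ` and all `z` of large norm. -/
lemma HasFiniteOrderGrowth.exists_forall_norm_le {f : ℂ → ℂ} (hf : Continuous f)
    (h : HasFiniteOrderGrowth f) :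
    ∃ ρ₀ : ℕ, ∀ ρ ≥ ρ₀, ∃ R₀ : ℝ, ∀ z, R₀ ≤ ‖z‖ → ‖f z‖ ≤ Real.exp (‖z‖ ^ ρ) := by
  obtain ⟨ρ, -, h⟩ := h
  obtain ⟨R₀, hR₀⟩ := h 1 one_pos
  refine ⟨⌈ρ + 1⌉₊, fun n hn => ⟨max R₀ 1, fun z hz => ?_⟩⟩
  refine (norm_le_supOnCircle hf z).trans ((hR₀ _ ((le_max_left _ _).trans hz)).trans ?_)
  rw [← Real.rpow_natCast]
  exact Real.exp_le_exp.2 (Real.rpow_le_rpow_of_exponent_le ((le_max_right _ _).trans hz)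
    ((Nat.le_ceil _).trans (by exact_mod_cast hn)))

/-- An entire function all of whose derivatives vanish at some point is zero. -/
lemma Differentiable.eq_zero_of_iteratedDeriv_eq_zero {F : ℂ → ℂ} (hF : Differentiable ℂ F)
    {w : ℂ} (h : ∀ k, iteratedDeriv k F w = 0) : F = 0 := by
  have htop : analyticOrderAt F w = ⊤ := ENat.eq_top_iff_forall_ge.2 fun n =>
    (natCast_le_analyticOrderAt_iff_iteratedDeriv_eq_zero (hF.analyticAt w)).2 fun i _ => h i
  exact AnalyticOnNhd.eq_of_eventuallyEq (fun z _ => hF.analyticAt z) (fun z _ => analyticAt_const)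
    (analyticOrderAt_eq_top.1 htop)

/-- An entire function vanishing to order at least `N` at `w` is divisible by `(z - w) ^ N`. -/
lemma Differentiable.exists_eq_sub_pow_mul {F : ℂ → ℂ} (hF : Differentiable ℂ F) {w : ℂ} {N : ℕ}
    (h : N ≤ analyticOrderAt F w) :
    ∃ G : ℂ → ℂ, Differentiable ℂ G ∧ F = (· - w) ^ N * G := by
  induction N generalizing F with
  | zero => exact ⟨F, hF, by simp⟩
  | succ N ih =>
    have hFw : F w = 0 := apply_eq_zero_of_analyticOrderAt_ne_zero fun h0 => by simp [h0] at h
    have hG : Differentiable ℂ (dslope F w) := by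
      rw [← differentiableOn_univ, Complex.differentiableOn_dslope Filter.univ_mem]
      exact hF.differentiableOn
    have hfac : F = (· - w) ^ 1 * dslope F w := by
      ext z
      have := sub_smul_dslope F w z
      simpa [hFw] using this.symm
    rw [hfac, analyticOrderAt_mul (by fun_prop) (hG.analyticAt w),
      analyticOrderAt_centeredMonomial, Nat.cast_add, add_comm,
      ENat.add_le_add_iff_left (by simp)] at h
    obtain ⟨G, hGd, hGeq⟩ := ih hG h
    refine ⟨G, hGd, ?_⟩
    rw [hfac]
    conv_lhs => rw [hGeq]
    rw [← mul_assoc, ← pow_add, add_comm]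

/-- An entire function vanishing to order at least `N` at all points of a finite set is divisible
by the corresponding product. -/
lemma Differentiable.exists_eq_prod_sub_pow_mul {F : ℂ → ℂ} (hF : Differentiable ℂ F)
    (W : Finset ℂ) {N : ℕ} (h : ∀ w ∈ W, N ≤ analyticOrderAt F w) :
    ∃ G : ℂ → ℂ, Differentiable ℂ G ∧ ∀ z, F z = (∏ w ∈ W, (z - w) ^ N) * G z := by
  classical
  induction W using Finset.induction_on generalizing F with
  | empty => exact ⟨F, hF, by simp⟩
  | insert v W hv ih =>
    obtain ⟨G, hG, hFG⟩ := hF.exists_eq_sub_pow_mul (h v (Finset.mem_insert_self _ _))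
    obtain ⟨H, hH, hGH⟩ := ih hG fun w hw => by
      have hvw : ((· - v) ^ N : ℂ → ℂ) w ≠ 0 :=
        pow_ne_zero _ (sub_ne_zero.2 fun e => hv (e ▸ hw))
      have h1 := h w (Finset.mem_insert_of_mem hw)
      rwa [hFG, analyticOrderAt_mul (by fun_prop) (hG.analyticAt w),
        (analyticOrderAt_eq_zero.2 (Or.inr hvw)), zero_add] at h1
    refine ⟨H, hH, fun z => ?_⟩
    rw [hFG, Finset.prod_insert hv, mul_assoc, ← hGH]
    rfl

/-- The Schwarz lemma for derivatives: an entire function vanishing to order at least `N` at the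
points of a finite set has a small `N`-th derivative there. -/
lemma Differentiable.norm_iteratedDeriv_le_of_vanishing {F : ℂ → ℂ} (hF : Differentiable ℂ F)
    {W : Finset ℂ} {N : ℕ} (h : ∀ w ∈ W, ∀ k < N, iteratedDeriv k F w = 0) {T R B : ℝ}
    (hT : 1 ≤ T) (hWT : ∀ w ∈ W, ‖w‖ ≤ T) (hR : 2 * T ≤ R) (hB : ∀ z, ‖z‖ = R → ‖F z‖ ≤ B)
    {w : ℂ} (hw : w ∈ W) :
    ‖iteratedDeriv N F w‖ ≤
      N.factorial * ((2 * T + 1) ^ (N * W.card) * (B / (R / 2) ^ (N * W.card))) := by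
  obtain ⟨G, hG, hFG⟩ := hF.exists_eq_prod_sub_pow_mul W fun w hw =>
    (natCast_le_analyticOrderAt_iff_iteratedDeriv_eq_zero (hF.analyticAt w)).2 (h w hw)
  have hR0 : 0 < R := by linarith
  have hGR : ∀ z, ‖z‖ = R → ‖G z‖ ≤ B / (R / 2) ^ (N * W.card) := by
    intro z hz
    have hprod : (R / 2) ^ (N * W.card) ≤ ∏ w ∈ W, ‖(z - w) ^ N‖ := by
      rw [pow_mul, ← Finset.prod_const]
      refine Finset.prod_le_prod (fun _ _ => by positivity) fun v hv => ?_
      rw [norm_pow]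
      gcongr
      have := norm_sub_norm_le z v
      linarith [hWT v hv]
    rw [le_div_iff₀ (by positivity), mul_comm]
    calc _ ≤ (∏ w ∈ W, ‖(z - w) ^ N‖) * ‖G z‖ := by gcongr
      _ = ‖F z‖ := by rw [hFG, norm_mul, norm_prod]
      _ ≤ B := hB z hz
  have hGball : ∀ z, ‖z‖ ≤ R → ‖G z‖ ≤ B / (R / 2) ^ (N * W.card) := by
    intro z hz
    refine Complex.norm_le_of_forall_mem_frontier_norm_le (U := Metric.ball 0 R)
      Metric.isBounded_ball hG.diffContOnCl (fun u hu => hGR u ?_) ?_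
    · rw [frontier_ball _ hR0.ne'] at hu
      simpa using hu
    · rw [closure_ball _ hR0.ne']
      simpa using hz
  have hcauchy := Complex.norm_iteratedDeriv_le_of_forall_mem_sphere_norm_le (c := w) N one_pos
    hF.diffContOnCl (C := (2 * T + 1) ^ (N * W.card) * (B / (R / 2) ^ (N * W.card))) ?_
  · simpa using hcauchy
  · intro z hz
    have hzw : ‖z - w‖ = 1 := by simpa [dist_eq_norm] using hz
    have hzT : ‖z‖ ≤ T + 1 := by
      have := norm_add_le (z - w) w
      rw [sub_add_cancel] at this
      linarith [hWT w hw]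
    rw [hFG, norm_mul, norm_prod]
    gcongr
    · rw [pow_mul, ← Finset.prod_const]
      refine Finset.prod_le_prod (fun _ _ => by positivity) fun v hv => ?_
      rw [norm_pow]
      gcongr
      linarith [norm_sub_le z v, hWT v hv]
    · exact hGball z (by linarith)

end EntireFunctions

section NumberFields

variable {K : Type*} [Field K] [NumberField K]

/-- **Siegel's lemma** over the ring of integers of a number field, for systems with twice as many
unknowns as equations. -/
lemma exists_small_solution (K : Type*) [Field K] [NumberField K] :
    ∃ c : ℝ, ∀ (α β : Type) [Fintype α] [Fintype β] (a : Matrix α β (𝓞 K)) (A : ℝ), a ≠ 0 →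
      0 < Fintype.card α → Fintype.card β = 2 * Fintype.card α →
      (∀ k l, house (a k l : K) ≤ A) →
      ∃ ξ : β → 𝓞 K, ξ ≠ 0 ∧ a.mulVec ξ = 0 ∧ ∀ l, house (ξ l : K) ≤ c * Fintype.card β * A := by
  classical
  obtain ⟨c, hc⟩ : ∃ c : ℝ, ∀ (α β : Type) [Fintype α] [Fintype β] (a : Matrix α β (𝓞 K)) (A : ℝ),
      a ≠ 0 → 0 < Fintype.card α → Fintype.card α < Fintype.card β →
      (∀ k l, house (a k l : K) ≤ A) →
      ∃ ξ : β → 𝓞 K, ξ ≠ 0 ∧ a.mulVec ξ = 0 ∧ ∀ l, house (ξ l : K) ≤ c * ((c *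
        (Fintype.card β : ℝ) * A) ^ ((Fintype.card α : ℝ) /
          ((Fintype.card β : ℝ) - (Fintype.card α : ℝ)))) :=
    ⟨_, fun α β _ _ a A ha h0 h1 h2 =>
      NumberField.house.exists_ne_zero_int_vec_house_le K a ha h0 h1 rfl h2 rfl⟩
  refine ⟨c * c, fun α β _ _ a A ha h0 h1 h2 => ?_⟩
  obtain ⟨ξ, hξ0, hξ, hb⟩ := hc α β a A ha h0 (by omega) h2
  refine ⟨ξ, hξ0, hξ, fun l => (hb l).trans (le_of_eq ?_)⟩
  have hcard : (Fintype.card α : ℝ) ≠ 0 := by exact_mod_cast h0.ne'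
  rw [h1, show (Fintype.card α : ℝ) / (((2 * Fintype.card α : ℕ) : ℝ) - Fintype.card α) = 1 by
    push_cast; field_simp; ring, Real.rpow_one]
  ring

/-- A finite set of elements of a number field has a common positive integral denominator. -/
lemma exists_nat_isIntegral_mul (s : Finset K) :
    ∃ δ : ℕ, 0 < δ ∧ ∀ x ∈ s, IsIntegral ℤ ((δ : K) * x) := by
  have : Algebra.IsAlgebraic ℤ K :=
    (IsFractionRing.comap_isAlgebraic_iff (A := ℤ) (K := ℚ) (C := K)).2 inferInstance
  obtain ⟨y, hy, h⟩ := Algebra.IsAlgebraic.exists_integral_multiples ℤ s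
  refine ⟨y.natAbs, Int.natAbs_pos.2 hy, fun x hx => ?_⟩
  have h1 := h x hx
  rw [zsmul_eq_mul] at h1
  rcases Int.natAbs_eq y with e | e
  · rw [e] at h1
    simpa using h1
  · rw [e] at h1
    simpa using h1.neg

/-- The fundamental inequality of Liouville type: the image of a nonzero algebraic integer
under an embedding cannot be small compared to its house. -/
lemma one_le_norm_mul_house_pow (σ : K →+* ℂ) {x : 𝓞 K} (hx : x ≠ 0) :
    1 ≤ ‖σ x‖ * house (x : K) ^ (Module.finrank ℚ K - 1) := by
  refine le_trans ?_ (norm_norm_le_norm_mul_house_pow (x : K) σ)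
  have h0 : Algebra.norm ℤ x ≠ 0 := Algebra.norm_ne_zero_iff.2 hx
  rw [← Algebra.coe_norm_int, ← Rat.norm_cast_real]
  simp only [Rat.cast_intCast]
  rw [Real.norm_eq_abs]
  exact_mod_cast Int.one_le_abs h0

end NumberFields

section DifferentialRing

variable {K : Type*} [Field K] {ι : Type*} [Fintype ι]
  {σ : K →+* ℂ} {f : ι → ℂ → ℂ} {P : ι → MvPolynomial ι K}

/-- The derivative of a monomial in functions whose derivatives are polynomials in these
functions. -/
lemma deriv_monomial_eq_sum (hent : ∀ i, Differentiable ℂ (f i))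
    (hP : ∀ i z, deriv (f i) z = (P i).eval₂ σ (fun j => f j z)) (m : ι →₀ ℕ) :
    deriv (fun z => ∏ i, f i z ^ m i) = fun z => ∑ i, ∑ μ ∈ (P i).support,
      (m i * σ ((P i).coeff μ)) * ∏ j, f j z ^ (m - Finsupp.single i 1 + μ : ι →₀ ℕ) j := by
  classical
  ext z
  have hder := HasDerivAt.fun_finsetProd (u := Finset.univ) (x := z)
    (f := fun i z => f i z ^ m i) fun i _ => ((hent i z).hasDerivAt.fun_pow (m i))
  rw [hder.deriv]
  refine Finset.sum_congr rfl fun i _ => ?_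
  have hprod : (∏ j ∈ Finset.univ.erase i, f j z ^ m j) * f i z ^ (m i - 1) =
      ∏ j, f j z ^ (m - Finsupp.single i 1 : ι →₀ ℕ) j := by
    rw [← Finset.prod_erase_mul _ _ (Finset.mem_univ i)]
    congr 1
    · refine Finset.prod_congr rfl fun j hj => ?_
      simp [Finsupp.single_eq_of_ne (Finset.ne_of_mem_erase hj)]
    · simp
  rw [hP, MvPolynomial.eval₂_eq', smul_eq_mul, Finset.mul_sum, Finset.mul_sum]
  refine Finset.sum_congr rfl fun μ _ => ?_
  simp only [Finsupp.add_apply, pow_add, Finset.prod_mul_distrib]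
  rw [← hprod]
  ring

variable [NumberField K]

/-- At a point where the functions `f i` take values in `K`, the derivatives of a monomial in
the `f i` have values in `K` with controlled denominators and conjugates. -/
lemma exists_iteratedDeriv_monomial_eq (hent : ∀ i, Differentiable ℂ (f i))
    (hP : ∀ i z, deriv (f i) z = (P i).eval₂ σ (fun j => f j z))
    {t : ℕ} (ht : ∀ i, (P i).totalDegree ≤ t) {w : ℂ} {x : ι → K} (hx : ∀ i, f i w = σ (x i))
    {δ : ℕ} (hδP : ∀ i, ∀ μ ∈ (P i).support, IsIntegral ℤ ((δ : K) * (P i).coeff μ))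
    (hδx : ∀ i, IsIntegral ℤ ((δ : K) * x i)) {M X : ℝ} (hM0 : 0 ≤ M) (hX1 : 1 ≤ X)
    (hM : ∀ i, ∑ μ ∈ (P i).support, house ((P i).coeff μ) ≤ M) (hX : ∀ i, house (x i) ≤ X)
    (k n : ℕ) (m : ι →₀ ℕ) (hm : ∑ i, m i ≤ n) :
    ∃ u : K, iteratedDeriv k (fun z => ∏ i, f i z ^ m i) w = σ u ∧
      IsIntegral ℤ ((δ : K) ^ (n + k * (t + 1)) * u) ∧
      house u ≤ (M * (n + k * t)) ^ k * X ^ (n + k * t) := by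
  induction k generalizing n m with
  | zero =>
    refine ⟨∏ i, x i ^ m i, by simp [hx], ?_, ?_⟩
    · have hsplit : (δ : K) ^ (n + 0 * (t + 1)) * ∏ i, x i ^ m i =
          (δ : K) ^ (n - ∑ i, m i) * ∏ i, ((δ : K) * x i) ^ m i := by
        simp only [mul_pow, Finset.prod_mul_distrib, Finset.prod_pow_eq_pow_sum]
        rw [← mul_assoc, ← pow_add]
        congr 2
        omega
      rw [hsplit]
      exact ((isIntegral_natCast (R := ℤ) _).pow _).mul
        (IsIntegral.prod _ fun i _ => (hδx i).pow _)
    · have hprod : house (∏ i, x i ^ m i) ≤ ∏ i, X ^ m i := by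
        refine le_trans ?_ (Finset.prod_le_prod (fun i _ => pow_nonneg (house_nonneg _) _)
          fun i _ => pow_le_pow_left₀ (house_nonneg _) (hX i) (m i))
        simp only [house, map_prod, map_pow]
        refine (Finset.norm_prod_le _ _).trans
          (Finset.prod_le_prod (fun _ _ => norm_nonneg _) fun i _ => norm_pow_le _ _)
      rw [Finset.prod_pow_eq_pow_sum] at hprod
      simpa using hprod.trans (pow_le_pow_right₀ hX1 hm)
  | succ k ih =>
    have hstep : ∀ i μ, ∃ u : K, μ ∈ (P i).support →
        iteratedDeriv k (fun z => ∏ j, f j z ^ (m - Finsupp.single i 1 + μ : ι →₀ ℕ) j) w = σ u ∧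
        IsIntegral ℤ ((δ : K) ^ (n + t + k * (t + 1)) * u) ∧
        house u ≤ (M * ((n + t : ℕ) + k * t)) ^ k * X ^ (n + t + k * t) := by
      intro i μ
      by_cases hμ : μ ∈ (P i).support
      · obtain ⟨u, hu⟩ := ih (n + t) (m - Finsupp.single i 1 + μ) (by
          have h1 : ∑ j, μ j ≤ t := by
            have := MvPolynomial.le_totalDegree hμ
            rw [Finsupp.sum_fintype _ _ (by simp)] at this
            exact this.trans (ht i)
          have h2 : ∑ j, (m - Finsupp.single i 1 : ι →₀ ℕ) j ≤ ∑ j, m j :=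
            Finset.sum_le_sum fun j _ => by simp
          simp only [Finsupp.add_apply, Finset.sum_add_distrib]
          omega)
        exact ⟨u, fun _ => hu⟩
      · exact ⟨0, fun h => absurd h hμ⟩
    choose u hu using hstep
    set B : ℝ := (M * ((n + t : ℕ) + k * t)) ^ k * X ^ (n + t + k * t) with hB
    have hB0 : 0 ≤ B := by positivity
    have hmonoDiff : ∀ m' : ι →₀ ℕ, ContDiff ℂ k (fun z => ∏ i, f i z ^ m' i) := fun m' =>
      contDiff_prod fun i _ => (hent i).contDiff.pow _
    refine ⟨∑ i, ∑ μ ∈ (P i).support, (m i * (P i).coeff μ) * u i μ, ?_, ?_, ?_⟩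
    · rw [iteratedDeriv_succ', deriv_monomial_eq_sum hent hP, iteratedDeriv_fun_sum fun i _ =>
        (ContDiff.sum fun μ _ => contDiff_const.mul (hmonoDiff _)).contDiffAt, map_sum]
      refine Finset.sum_congr rfl fun i _ => ?_
      rw [iteratedDeriv_fun_sum fun μ _ => (contDiff_const.mul (hmonoDiff _)).contDiffAt, map_sum]
      refine Finset.sum_congr rfl fun μ hμ => ?_
      rw [iteratedDeriv_const_mul _ (hmonoDiff _).contDiffAt, (hu i μ hμ).1]
      simp
    · rw [Finset.mul_sum]
      refine IsIntegral.sum _ fun i _ => ?_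
      rw [Finset.mul_sum]
      refine IsIntegral.sum _ fun μ hμ => ?_
      have hsplit : (δ : K) ^ (n + (k + 1) * (t + 1)) * (m i * (P i).coeff μ * u i μ) =
          (m i : K) * ((δ : K) * (P i).coeff μ) * ((δ : K) ^ (n + t + k * (t + 1)) * u i μ) := by
        ring
      rw [hsplit]
      exact ((isIntegral_natCast (R := ℤ) _).mul (hδP i μ hμ)).mul (hu i μ hμ).2.1
    · calc house (∑ i, ∑ μ ∈ (P i).support, (m i * (P i).coeff μ) * u i μ)
          ≤ ∑ i, ∑ μ ∈ (P i).support, (m i * house ((P i).coeff μ)) * B := by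
            refine (house_sum_le_sum_house _ _).trans (Finset.sum_le_sum fun i _ => ?_)
            refine (house_sum_le_sum_house _ _).trans (Finset.sum_le_sum fun μ hμ => ?_)
            refine (house_mul_le _ _).trans ?_
            rw [house_nat_mul]
            exact mul_le_mul_of_nonneg_left (hu i μ hμ).2.2
              (mul_nonneg (Nat.cast_nonneg _) (house_nonneg _))
        _ = ∑ i, (m i : ℝ) * (∑ μ ∈ (P i).support, house ((P i).coeff μ)) * B := by
            simp only [Finset.mul_sum, Finset.sum_mul]
        _ ≤ ∑ i, (m i : ℝ) * M * B := by
            gcongr with i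
            exact hM i
        _ = ((∑ i, m i : ℕ) : ℝ) * M * B := by
            simp only [Nat.cast_sum, Finset.sum_mul]
        _ ≤ (n + (k + 1 : ℕ) * t : ℝ) * M * B := by
            gcongr
            have h1 : ((∑ i, m i : ℕ) : ℝ) ≤ n := by exact_mod_cast hm
            have h2 : (0 : ℝ) ≤ (k + 1 : ℕ) * t := by positivity
            linarith
        _ = _ := by
            rw [hB, show n + t + k * t = n + (k + 1) * t by ring]
            push_cast
            ring

/-- At finitely many points where the functions `f i` take values in `K`, the derivatives of
products of powers of two of them become algebraic integers of controlled house after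
multiplication by a power of a fixed denominator. -/
lemma exists_iteratedDeriv_pow_mul_pow_eq (hent : ∀ i, Differentiable ℂ (f i))
    (hP : ∀ i z, deriv (f i) z = (P i).eval₂ σ (fun j => f j z)) {W : Finset ℂ}
    (hW : ∀ w ∈ W, ∀ i, ∃ x, f i w = σ x) (i₀ i₁ : ι) :
    ∃ δ : ℕ, 0 < δ ∧ ∃ C : ℝ, 1 ≤ C ∧ ∀ N k a b : ℕ, k ≤ N → a ≤ N → b ≤ N → ∀ w ∈ W,
      ∃ v : 𝓞 K, σ v = δ ^ N * iteratedDeriv k (fun z => f i₀ z ^ a * f i₁ z ^ b) w ∧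
        house (v : K) ≤ C ^ N * N ^ N := by
  classical
  have hx : ∀ w, ∃ x : ι → K, w ∈ W → ∀ i, f i w = σ (x i) := by
    intro w
    by_cases hw : w ∈ W
    · choose x hx using hW w hw
      exact ⟨x, fun _ => hx⟩
    · exact ⟨0, fun h => absurd h hw⟩
  choose x hx using hx
  obtain ⟨δ, hδ0, hδ⟩ := exists_nat_isIntegral_mul
    ((Finset.univ.biUnion fun i => (P i).support.image (P i).coeff) ∪
      W.biUnion fun w => Finset.univ.image (x w))
  set t : ℕ := ∑ i, (P i).totalDegree with ht
  set M : ℝ := 1 + ∑ i, ∑ μ ∈ (P i).support, house ((P i).coeff μ) with hM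
  set X : ℝ := 1 + ∑ w ∈ W, ∑ i, house (x w i) with hX
  have hM1 : 1 ≤ M := le_add_of_nonneg_right
    (Finset.sum_nonneg fun _ _ => Finset.sum_nonneg fun _ _ => house_nonneg _)
  have hX1 : 1 ≤ X := le_add_of_nonneg_right
    (Finset.sum_nonneg fun _ _ => Finset.sum_nonneg fun _ _ => house_nonneg _)
  have hδ1 : (1 : ℝ) ≤ δ := by exact_mod_cast hδ0
  refine ⟨δ ^ (t + 3), by positivity, (δ ^ (t + 3) : ℝ) * ((M * (t + 2)) * X ^ (t + 2)), ?_, ?_⟩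
  · have h1 : (1 : ℝ) ≤ t + 2 := by linarith [(Nat.cast_nonneg t : (0 : ℝ) ≤ t)]
    exact one_le_mul_of_one_le_of_one_le (one_le_pow₀ hδ1)
      (one_le_mul_of_one_le_of_one_le (one_le_mul_of_one_le_of_one_le hM1 h1) (one_le_pow₀ hX1))
  intro N k a b hk ha hb w hw
  obtain ⟨u, hu, huint, hhouse⟩ := exists_iteratedDeriv_monomial_eq (t := t) (w := w) (x := x w)
    (δ := δ) (M := M) (X := X) hent hP
    (fun i => Finset.single_le_sum (f := fun i => (P i).totalDegree) (fun _ _ => Nat.zero_le _)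
      (Finset.mem_univ i))
    (hx w hw)
    (fun i μ hμ => hδ _ (Finset.mem_union_left _ (Finset.mem_biUnion.2
      ⟨i, Finset.mem_univ i, Finset.mem_image_of_mem _ hμ⟩)))
    (fun i => hδ _ (Finset.mem_union_right _ (Finset.mem_biUnion.2
      ⟨w, hw, Finset.mem_image_of_mem _ (Finset.mem_univ i)⟩)))
    (zero_le_one.trans hM1) hX1
    (fun i => (Finset.single_le_sum (f := fun i => ∑ μ ∈ (P i).support, house ((P i).coeff μ))
      (fun _ _ => Finset.sum_nonneg fun _ _ => house_nonneg _) (Finset.mem_univ i)).trans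
        (by linarith))
    (fun i => ((Finset.single_le_sum (f := fun i => house (x w i))
      (fun _ _ => house_nonneg _) (Finset.mem_univ i)).trans
      (Finset.single_le_sum (f := fun w => ∑ i, house (x w i))
      (fun _ _ => Finset.sum_nonneg fun _ _ => house_nonneg _) hw)).trans (by linarith))
    k (2 * N) (Finsupp.single i₀ a + Finsupp.single i₁ b) (by
      simp only [Finsupp.add_apply, Finset.sum_add_distrib, Finsupp.single_apply,
        Finset.sum_ite_eq, Finset.mem_univ, if_true]
      omega)
  have hmono : (fun z => ∏ i, f i z ^ (Finsupp.single i₀ a + Finsupp.single i₁ b) i) =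
      fun z => f i₀ z ^ a * f i₁ z ^ b := by
    ext z
    simp only [Finsupp.add_apply, pow_add, Finset.prod_mul_distrib]
    simp [Finsupp.single_apply, pow_ite]
  rw [hmono] at hu
  have hle : 2 * N + k * (t + 1) ≤ (t + 3) * N := by nlinarith
  have huint' : IsIntegral ℤ ((δ : K) ^ ((t + 3) * N) * u) := by
    rw [← Nat.sub_add_cancel hle, pow_add, mul_assoc]
    exact ((isIntegral_natCast (R := ℤ) _).pow _).mul huint
  refine ⟨⟨_, huint'⟩, ?_, ?_⟩
  · rw [hu]
    simp [pow_mul]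
  · calc house ((δ : K) ^ ((t + 3) * N) * u)
        = (δ : ℝ) ^ ((t + 3) * N) * house u := by
          rw [← Nat.cast_pow, house_nat_mul, Nat.cast_pow]
      _ ≤ (δ : ℝ) ^ ((t + 3) * N) * ((M * ((t + 2) * N)) ^ N * X ^ ((t + 2) * N)) := by
          gcongr
          refine hhouse.trans ?_
          have hkN : (k : ℝ) ≤ N := by exact_mod_cast hk
          rcases Nat.eq_zero_or_pos N with hN | hN
          · obtain rfl : k = 0 := by omega
            simp [hN]
          have hN1 : (1 : ℝ) ≤ N := by exact_mod_cast hN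
          have hbase : M * ((2 * N : ℕ) + k * t) ≤ M * ((t + 2) * N) := by
            push_cast
            have : (k : ℝ) * t ≤ N * t := by gcongr
            gcongr
            linarith
          gcongr ?_ * ?_
          · refine (pow_le_pow_left₀ (by positivity) hbase k).trans (pow_le_pow_right₀ ?_ hk)
            exact one_le_mul_of_one_le_of_one_le hM1
              (one_le_mul_of_one_le_of_one_le (by linarith [(Nat.cast_nonneg t : (0 : ℝ) ≤ t)])
                hN1)
          · exact pow_le_pow_right₀ hX1 (by nlinarith)
      _ = _ := by
          rw [pow_mul, pow_mul]
          simp only [mul_pow]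
          ring

end DifferentialRing

section AuxiliaryFunction

variable {K : Type*} [Field K] [NumberField K] {σ : K →+* ℂ}

/-- The coefficients of the auxiliary function: there is a nontrivial combination of the
`g₀ ^ a * g₁ ^ b` with small algebraic integer coefficients which vanishes to high order at the points of `W`. -/
lemma exists_auxiliary_coefficients {g₀ g₁ : ℂ → ℂ} {W : Finset ℂ} (hW : W.Nonempty) {δ : ℕ}
    (hδ : 0 < δ) {C : ℝ} (hC : 1 ≤ C)
    (hv : ∀ N k a b : ℕ, k ≤ N → a ≤ N → b ≤ N → ∀ w ∈ W,
      ∃ v : 𝓞 K, σ v = δ ^ N * iteratedDeriv k (fun z => g₀ z ^ a * g₁ z ^ b) w ∧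
        house (v : K) ≤ C ^ N * N ^ N) :
    ∃ C₁ : ℝ, 1 ≤ C₁ ∧ ∀ s r n : ℕ, 1 ≤ s → r = 2 * W.card * s → n = 2 * W.card * s ^ 2 →
      ∃ ξ : Fin r × Fin r → 𝓞 K, ξ ≠ 0 ∧
        (∀ w ∈ W, ∀ k < n, ∑ p, σ (ξ p) *
          iteratedDeriv k (fun z => g₀ z ^ (p.1 : ℕ) * g₁ z ^ (p.2 : ℕ)) w = 0) ∧
        ∑ p, house (ξ p : K) ≤ C₁ ^ n * n ^ n := by
  obtain ⟨c, hc⟩ := exists_small_solution K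
  set m := W.card with hm
  have hm0 : 0 < m := Finset.card_pos.2 hW
  set D : ℝ := max 1 (|c| * 4 * m ^ 2) with hD
  have hD1 : 1 ≤ D := le_max_left _ _
  refine ⟨D * 4 * C, one_le_mul_of_one_le_of_one_le (by linarith) hC, ?_⟩
  intro s r n hs hr hn
  have hrn : r ≤ n := by
    rw [hr, hn, pow_two, ← mul_assoc]
    exact Nat.le_mul_of_pos_right _ hs
  have hr0 : 0 < r := by rw [hr]; positivity
  have hn0 : 0 < n := hr0.trans_le hrn
  choose v hvσ hvh using fun (q : W × Fin n) (p : Fin r × Fin r) =>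
    hv n q.2 p.1 p.2 q.2.2.le (p.1.2.le.trans hrn) (p.2.2.le.trans hrn) q.1 q.1.2
  have hδ0 : (δ : ℂ) ^ n ≠ 0 := pow_ne_zero _ (by exact_mod_cast hδ.ne')
  have hcardα : Fintype.card (W × Fin n) = m * n := by simp [hm]
  have hcardβ : Fintype.card (Fin r × Fin r) = r * r := by simp
  have hrr : r * r = 2 * (m * n) := by rw [hr, hn]; ring
  obtain ⟨ξ, hξ0, hξ, hξb⟩ := hc (W × Fin n) (Fin r × Fin r) (Matrix.of v) (C ^ n * n ^ n)
    (by
      obtain ⟨w, hw⟩ := hW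
      intro h0
      have h1 := hvσ (⟨w, hw⟩, ⟨0, hn0⟩) (⟨0, hr0⟩, ⟨0, hr0⟩)
      have h2 : v (⟨w, hw⟩, ⟨0, hn0⟩) (⟨0, hr0⟩, ⟨0, hr0⟩) = 0 := congrFun (congrFun h0 _) _
      rw [h2] at h1
      simp only [map_zero, pow_zero, mul_one, iteratedDeriv_zero] at h1
      exact hδ0 h1.symm)
    (by rw [hcardα]; positivity) (by rw [hcardα, hcardβ, hrr]) hvh
  refine ⟨ξ, hξ0, fun w hw k hk => ?_, ?_⟩
  · have h1 := congrFun hξ (⟨w, hw⟩, ⟨k, hk⟩)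
    have h2 : ∑ p, v (⟨w, hw⟩, ⟨k, hk⟩) p * ξ p = 0 := h1
    have h3 := congrArg (fun y : 𝓞 K => σ y) h2
    simp only [map_sum, map_mul, map_zero, hvσ] at h3
    refine (mul_eq_zero.1 (?_ : (δ : ℂ) ^ n * _ = 0)).resolve_left hδ0
    rw [Finset.mul_sum, ← h3]
    refine Finset.sum_congr rfl fun p _ => ?_
    ring
  · have hn4 : (n : ℝ) ^ 2 ≤ 4 ^ n := by
      have h1 : (n : ℝ) ≤ 2 ^ n := by exact_mod_cast Nat.lt_two_pow_self.le
      calc (n : ℝ) ^ 2 ≤ (2 ^ n) ^ 2 := by gcongr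
        _ = 4 ^ n := by rw [← pow_mul, mul_comm, pow_mul]; norm_num
    have hrrR : (r * r : ℝ) = 2 * (m * n) := by exact_mod_cast hrr
    calc ∑ p, house (ξ p : K)
        ≤ ∑ p : Fin r × Fin r, c * Fintype.card (Fin r × Fin r) * (C ^ n * n ^ n) :=
          Finset.sum_le_sum fun p _ => hξb p
      _ = c * (r * r : ℝ) ^ 2 * (C ^ n * n ^ n) := by
          rw [Finset.sum_const, Finset.card_univ, hcardβ, nsmul_eq_mul]
          push_cast
          ring
      _ ≤ |c| * (r * r : ℝ) ^ 2 * (C ^ n * n ^ n) := by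
          gcongr
          exact le_abs_self c
      _ = (|c| * 4 * m ^ 2) * (n ^ 2 * (C ^ n * n ^ n)) := by rw [hrrR]; ring
      _ ≤ D ^ n * (4 ^ n * (C ^ n * n ^ n)) := by
          gcongr
          exact (le_max_right _ _).trans (le_self_pow₀ hD1 hn0.ne')
      _ = (D * 4 * C) ^ n * n ^ n := by rw [mul_pow, mul_pow]; ring

/-- The conclusion of the arithmetic-analytic comparison: upper and lower bounds for the first
nonvanishing derivative of the auxiliary function bound its order `N`. -/
lemma le_of_upper_and_lower_bound {N h : ℕ} (hN : 0 < N) (hh : 0 < h) {γ δ C₃ C₄ H : ℝ}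
    (hδ : 0 ≤ δ) (hC₃ : 0 ≤ C₃) (hC₄ : 0 ≤ C₄) (hH0 : 0 ≤ H)
    (hupper : γ * (N : ℝ) ^ ((2 * h + 1) * N) ≤ C₃ ^ N * N ^ (2 * N))
    (hH : H ≤ C₄ ^ N * N ^ (2 * N)) (hlower : 1 ≤ δ ^ N * γ * H ^ (h - 1)) :
    (N : ℝ) ≤ δ * C₃ * C₄ ^ (h - 1) := by
  obtain ⟨h, rfl⟩ : ∃ h', h = h' + 1 := ⟨h - 1, by omega⟩
  rw [Nat.add_sub_cancel] at *
  have hN0 : (0 : ℝ) < N := by exact_mod_cast hN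
  have key : (N : ℝ) ^ N * (N : ℝ) ^ (2 * (h + 1) * N) ≤
      (δ * C₃ * C₄ ^ h) ^ N * (N : ℝ) ^ (2 * (h + 1) * N) := by
    calc (N : ℝ) ^ N * (N : ℝ) ^ (2 * (h + 1) * N)
        = 1 * (N : ℝ) ^ ((2 * (h + 1) + 1) * N) := by ring
      _ ≤ (δ ^ N * γ * H ^ h) * (N : ℝ) ^ ((2 * (h + 1) + 1) * N) := by gcongr
      _ = δ ^ N * (γ * (N : ℝ) ^ ((2 * (h + 1) + 1) * N)) * H ^ h := by ring
      _ ≤ δ ^ N * (C₃ ^ N * N ^ (2 * N)) * (C₄ ^ N * N ^ (2 * N)) ^ h := by gcongr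
      _ = (δ * C₃ * C₄ ^ h) ^ N * (N : ℝ) ^ (2 * (h + 1) * N) := by ring
  exact le_of_pow_le_pow_left₀ hN.ne' (by positivity) (le_of_mul_le_mul_right key (by positivity))

variable {ι : Type*} [Fintype ι] {f : ι → ℂ → ℂ} {P : ι → MvPolynomial ι K}

/-- The Schneider–Lang criterion for a number field `K` with an embedding into `ℂ`. -/
theorem finite_setOf_forall_mem_range (hent : ∀ i, Differentiable ℂ (f i))
    (hP : ∀ i z, deriv (f i) z = (P i).eval₂ σ (fun j => f j z)) {i₀ i₁ : ι}
    (hgrowth₀ : HasFiniteOrderGrowth (f i₀)) (hgrowth₁ : HasFiniteOrderGrowth (f i₁))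
    (hindep : ∀ (r : ℕ) (ξ : Fin r × Fin r → K),
      (∀ z, ∑ p, σ (ξ p) * (f i₀ z ^ (p.1 : ℕ) * f i₁ z ^ (p.2 : ℕ)) = 0) → ξ = 0) :
    {w : ℂ | ∀ i, ∃ x, f i w = σ x}.Finite := by
  by_contra hinf
  obtain ⟨ρ₀, hρ₀⟩ := hgrowth₀.exists_forall_norm_le (hent i₀).continuous
  obtain ⟨ρ₁, hρ₁⟩ := hgrowth₁.exists_forall_norm_le (hent i₁).continuous
  set ρ := ρ₀ + ρ₁ + 1 with hρ
  obtain ⟨R₀, hR₀⟩ := hρ₀ ρ (by omega)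
  obtain ⟨R₁, hR₁⟩ := hρ₁ ρ (by omega)
  set h := Module.finrank ℚ K with hh
  have hh0 : 0 < h := Module.finrank_pos
  set m := 2 * ρ * (2 * h + 1) with hm
  have hm0 : 0 < m := by positivity
  obtain ⟨W, hWS, hWm⟩ := Set.Infinite.exists_subset_card_eq hinf m
  have hWne : W.Nonempty := Finset.card_pos.1 (hWm ▸ hm0)
  set T : ℝ := 1 + ∑ w ∈ W, ‖w‖ with hT
  have hT1 : 1 ≤ T := le_add_of_nonneg_right (Finset.sum_nonneg fun _ _ => norm_nonneg _)
  have hWT : ∀ w ∈ W, ‖w‖ ≤ T := fun w hw =>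
    (Finset.single_le_sum (f := fun w : ℂ => ‖w‖) (fun _ _ => norm_nonneg _) hw).trans
      (by linarith)
  obtain ⟨δ, hδ, C, hC, hv⟩ := exists_iteratedDeriv_pow_mul_pow_eq hent hP
    (fun w hw => hWS hw) i₀ i₁
  obtain ⟨C₁, hC₁, haux⟩ := exists_auxiliary_coefficients hWne hδ hC hv
  rw [hWm] at haux
  set C₂ : ℝ := C₁ * Real.exp (4 * m) with hC₂
  set C₃ : ℝ := ((2 * T + 1) * 2) ^ m * C₂ with hC₃
  set Rmin : ℝ := max (2 * T) (max R₀ R₁) with hRmin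
  have hRmin0 : 0 ≤ Rmin := le_trans (by linarith) (le_max_left _ _)
  obtain ⟨s, hs⟩ := exists_nat_gt (max (δ * C₃ * (C₁ * C) ^ (h - 1)) (Rmin ^ (2 * ρ)))
  have hs1 : 1 ≤ s := by
    rcases Nat.eq_zero_or_pos s with h0 | h0
    · have h1 : 0 ≤ Rmin ^ (2 * ρ) := by positivity
      rw [h0, Nat.cast_zero] at hs
      exact absurd ((le_max_right _ _).trans_lt hs) h1.not_gt
    · exact h0
  obtain ⟨r, hr⟩ : ∃ r, r = 2 * m * s := ⟨_, rfl⟩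
  obtain ⟨n, hn⟩ : ∃ n, n = 2 * m * s ^ 2 := ⟨_, rfl⟩
  obtain ⟨ξ, hξ0, hξvan, hξb⟩ := haux s r n hs1 hr hn
  have hs2n : s ^ 2 ≤ n := by
    rw [hn]
    exact Nat.le_mul_of_pos_left _ (by positivity)
  have hrn : r ≤ n := by
    rw [hr, hn]
    exact Nat.mul_le_mul_left _ (Nat.le_self_pow two_ne_zero s)
  set mono : Fin r × Fin r → ℂ → ℂ := fun p z => f i₀ z ^ (p.1 : ℕ) * f i₁ z ^ (p.2 : ℕ)
    with hmono
  have hmonoD : ∀ p, Differentiable ℂ (mono p) := fun p =>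
    ((hent i₀).pow _).mul ((hent i₁).pow _)
  set F : ℂ → ℂ := fun z => ∑ p, σ (ξ p) * mono p z with hF
  have hFd : Differentiable ℂ F := by
    simp only [hF]
    exact Differentiable.fun_sum fun p _ => (hmonoD p).const_mul _
  have hFder : ∀ k w, iteratedDeriv k F w = ∑ p, σ (ξ p) * iteratedDeriv k (mono p) w := by
    intro k w
    simp only [hF]
    rw [iteratedDeriv_fun_sum fun p _ => (contDiff_const.mul (hmonoD p).contDiff).contDiffAt]
    exact Finset.sum_congr rfl fun p _ => iteratedDeriv_const_mul _ (hmonoD p).contDiff.contDiffAt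
  have hex : ∃ k, ∃ w ∈ W, iteratedDeriv k F w ≠ 0 := by
    by_contra! hzero
    obtain ⟨w, hw⟩ := hWne
    have hF0 := hFd.eq_zero_of_iteratedDeriv_eq_zero fun k => hzero k w hw
    have hξK := hindep r (fun p => (ξ p : K)) fun z => congrFun hF0 z
    exact hξ0 (funext fun p => RingOfIntegers.ext (congrFun hξK p))
  classical
  set N := Nat.find hex with hNdef
  obtain ⟨w, hw, hγ0⟩ := Nat.find_spec hex
  rw [← hNdef] at hγ0
  have hvan : ∀ w ∈ W, ∀ k < N, iteratedDeriv k F w = 0 := by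
    intro w hw k hk
    by_contra hne
    exact Nat.find_min hex hk ⟨w, hw, hne⟩
  have hnN : n ≤ N := by
    by_contra! hlt
    exact hγ0 ((hFder N w).trans (hξvan w hw N hlt))
  have hsn : s ≤ n := (Nat.le_self_pow two_ne_zero s).trans hs2n
  have hN0 : 0 < N := by omega
  have hsN : (s : ℝ) ≤ N := by exact_mod_cast hsn.trans hnN
  have hcoef : ∑ p, house (ξ p : K) ≤ C₁ ^ N * N ^ N := by
    refine hξb.trans ?_
    have hn1 : (n : ℝ) ^ n ≤ (N : ℝ) ^ N := by
      exact_mod_cast (Nat.pow_le_pow_left hnN n).trans (Nat.pow_le_pow_right hN0 hnN)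
    gcongr
  set R : ℝ := (N : ℝ) ^ (1 / (2 * ρ : ℕ) : ℝ) with hR
  have hRpow : R ^ (2 * ρ) = N := by
    rw [hR, ← Real.rpow_natCast, ← Real.rpow_mul (Nat.cast_nonneg _), one_div,
      inv_mul_cancel₀ (by positivity), Real.rpow_one]
  have hR0 : 0 ≤ R := by positivity
  have hRR : Rmin ≤ R := by
    refine le_of_pow_le_pow_left₀ (n := 2 * ρ) (by positivity) hR0 ?_
    rw [hRpow]
    exact ((le_max_right _ _).trans hs.le).trans hsN
  have hFbound : ∀ z, ‖z‖ = R → ‖F z‖ ≤ C₂ ^ N * N ^ N := by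
    intro z hz
    have hf₀ : ‖f i₀ z‖ ≤ Real.exp (R ^ ρ) := by
      rw [← hz]
      exact hR₀ z (hz ▸ ((le_max_left _ _).trans (le_max_right _ _)).trans hRR)
    have hf₁ : ‖f i₁ z‖ ≤ Real.exp (R ^ ρ) := by
      rw [← hz]
      exact hR₁ z (hz ▸ ((le_max_right _ _).trans (le_max_right _ _)).trans hRR)
    have hexp1 : 1 ≤ Real.exp (R ^ ρ) := Real.one_le_exp (by positivity)
    have hmonoB : ∀ p, ‖mono p z‖ ≤ Real.exp (4 * m * N) := by
      intro p
      have hsR : (s : ℝ) ≤ R ^ ρ := by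
        refine le_of_pow_le_pow_left₀ two_ne_zero (by positivity) ?_
        rw [← pow_mul, mul_comm ρ, hRpow]
        exact_mod_cast hs2n.trans hnN
      calc ‖mono p z‖ = ‖f i₀ z‖ ^ (p.1 : ℕ) * ‖f i₁ z‖ ^ (p.2 : ℕ) := by
            simp only [hmono, norm_mul, norm_pow]
        _ ≤ Real.exp (R ^ ρ) ^ (p.1 : ℕ) * Real.exp (R ^ ρ) ^ (p.2 : ℕ) := by gcongr
        _ ≤ Real.exp (R ^ ρ) ^ r * Real.exp (R ^ ρ) ^ r := by
            gcongr
            · exact p.1.2.le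
            · exact p.2.2.le
        _ = Real.exp (4 * m * (s * R ^ ρ)) := by
            rw [← Real.exp_nat_mul, ← Real.exp_add, hr]
            push_cast
            ring_nf
        _ ≤ Real.exp (4 * m * N) := by
            have hsN' : s * R ^ ρ ≤ N := by
              calc s * R ^ ρ ≤ R ^ ρ * R ^ ρ := mul_le_mul_of_nonneg_right hsR (by positivity)
                _ = N := by rw [← pow_add, ← two_mul, hRpow]
            gcongr
    calc ‖F z‖ ≤ ∑ p, ‖σ (ξ p) * mono p z‖ := norm_sum_le _ _
      _ ≤ ∑ p, house (ξ p : K) * Real.exp (4 * m * N) := by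
          refine Finset.sum_le_sum fun p _ => ?_
          rw [norm_mul]
          exact mul_le_mul (norm_embedding_le_house _ _) (hmonoB p) (norm_nonneg _)
            (house_nonneg _)
      _ ≤ C₁ ^ N * N ^ N * Real.exp (4 * m * N) := by
          rw [← Finset.sum_mul]
          gcongr
      _ = C₂ ^ N * N ^ N := by
          rw [hC₂, mul_pow, ← Real.exp_nat_mul, mul_comm (N : ℝ) (4 * m)]
          ring
  have hschwarz := hFd.norm_iteratedDeriv_le_of_vanishing hvan hT1 hWT
    ((le_max_left _ _).trans hRR) hFbound hw
  rw [hWm] at hschwarz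
  have hRpos : 0 < R := lt_of_lt_of_le (by linarith) ((le_max_left (2 * T) _).trans hRR)
  have hupper : ‖iteratedDeriv N F w‖ * (N : ℝ) ^ ((2 * h + 1) * N) ≤
      C₃ ^ N * N ^ (2 * N) := by
    have hRm : R ^ (N * m) = (N : ℝ) ^ ((2 * h + 1) * N) := by
      rw [hm, show N * (2 * ρ * (2 * h + 1)) = (2 * ρ) * ((2 * h + 1) * N) by ring, pow_mul,
        hRpow]
    have hfact : (N.factorial : ℝ) ≤ (N : ℝ) ^ N := by exact_mod_cast Nat.factorial_le_pow N
    calc ‖iteratedDeriv N F w‖ * (N : ℝ) ^ ((2 * h + 1) * N)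
        ≤ (N : ℝ) ^ N * ((2 * T + 1) ^ (N * m) * (C₂ ^ N * N ^ N / (R / 2) ^ (N * m))) *
            R ^ (N * m) := by
          rw [hRm]
          gcongr
          refine hschwarz.trans ?_
          gcongr
      _ = (N : ℝ) ^ N * ((2 * T + 1) ^ (N * m) * (C₂ ^ N * N ^ N * 2 ^ (N * m))) := by
          rw [div_pow]
          field_simp
      _ = C₃ ^ N * N ^ (2 * N) := by
          rw [hC₃, mul_pow _ C₂, ← pow_mul, mul_comm m N, mul_pow (2 * T + 1)]
          ring
  choose v hvσ hvh using fun p : Fin r × Fin r =>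
    hv N N p.1 p.2 le_rfl ((p.1.2.le.trans hrn).trans hnN) ((p.2.2.le.trans hrn).trans hnN) w hw
  set Γ : 𝓞 K := ∑ p, ξ p * v p with hΓ
  have hΓσ : σ Γ = δ ^ N * iteratedDeriv N F w := by
    rw [hFder, hΓ, Finset.mul_sum]
    simp only [map_sum, map_mul, hvσ]
    exact Finset.sum_congr rfl fun p _ => by ring
  have hδC : (δ : ℂ) ^ N ≠ 0 := pow_ne_zero _ (by exact_mod_cast hδ.ne')
  have hΓ0 : Γ ≠ 0 := by
    intro h0
    rw [h0] at hΓσ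
    simp only [map_zero] at hΓσ
    exact mul_ne_zero hδC hγ0 hΓσ.symm
  have hΓh : house (Γ : K) ≤ (C₁ * C) ^ N * N ^ (2 * N) := by
    calc house (Γ : K) ≤ ∑ p, house (ξ p : K) * (C ^ N * N ^ N) := by
          have hΓK : (Γ : K) = ∑ p, (ξ p : K) * v p := by simp only [hΓ, map_sum, map_mul]
          rw [hΓK]
          refine (house_sum_le_sum_house _ _).trans (Finset.sum_le_sum fun p _ => ?_)
          exact (house_mul_le _ _).trans (mul_le_mul_of_nonneg_left (hvh p) (house_nonneg _))
      _ ≤ C₁ ^ N * N ^ N * (C ^ N * N ^ N) := by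
          rw [← Finset.sum_mul]
          gcongr
      _ = (C₁ * C) ^ N * N ^ (2 * N) := by ring
  have hlower := one_le_norm_mul_house_pow σ hΓ0
  rw [hΓσ, norm_mul, norm_pow, Complex.norm_natCast] at hlower
  have hfinal := le_of_upper_and_lower_bound hN0 hh0 (Nat.cast_nonneg δ) (by positivity)
    (by positivity) (house_nonneg _) hupper hΓh hlower
  linarith [(le_max_left _ _).trans_lt hs]

end AuxiliaryFunction

/-- **Schneider–Lang Criterion.** Let `K ⊆ ℂ` be a number field and
`f₁, …, f_d` entire functions, with `f₁, f₂` algebraically independent over `K`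
and of finite order of growth, each `f_i'` a polynomial with coefficients in `K`
in `f₁, …, f_d`. Then the set of `w ∈ ℂ` with `f_i(w) ∈ K` for all `i` is finite. -/
theorem schneider_lang_criterion
    (K : Subfield ℂ) (hK : FiniteDimensional ℚ K)
    (d : ℕ) (hd : 2 ≤ d)
    (f : Fin d → ℂ → ℂ)
    (hent : ∀ i, Differentiable ℂ (f i))
    (horder1 : HasFiniteOrderGrowth (f (Fin.castLE hd 0)))
    (horder2 : HasFiniteOrderGrowth (f (Fin.castLE hd 1)))
    (halgind : ∀ P : MvPolynomial (Fin 2) ℂ, (∀ m, MvPolynomial.coeff m P ∈ K) →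
      (∀ z : ℂ, MvPolynomial.eval (fun i : Fin 2 => f (Fin.castLE hd i) z) P = 0) →
      P = 0)
    (hdiff : ∀ i, ∃ P : MvPolynomial (Fin d) ℂ, (∀ m, MvPolynomial.coeff m P ∈ K) ∧
      ∀ z : ℂ, deriv (f i) z = MvPolynomial.eval (fun j => f j z) P) :
    {w : ℂ | ∀ i, f i w ∈ K}.Finite := by
  have : NumberField K := { to_finiteDimensional := hK }
  choose P hPK hP using hdiff
  have hlift : ∀ i, ∃ Q : MvPolynomial (Fin d) K, MvPolynomial.map K.subtype Q = P i := by
    intro i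
    have hmem : P i ∈ Set.range (MvPolynomial.map K.subtype) := by
      rw [MvPolynomial.mem_range_map_iff_coeffs_subset]
      intro c hc
      obtain ⟨μ, -, rfl⟩ := MvPolynomial.mem_coeffs_iff.1 hc
      exact ⟨⟨_, hPK i μ⟩, rfl⟩
    exact hmem
  choose Q hQ using hlift
  have hfin := finite_setOf_forall_mem_range (σ := K.subtype) (P := Q) hent
    (fun i z => by rw [hP, ← hQ, MvPolynomial.eval_map]) horder1 horder2 fun r ξ hξ => ?_
  · refine hfin.subset fun w hw i => ⟨⟨f i w, hw i⟩, rfl⟩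
  · set exponent : Fin r × Fin r → (Fin 2 →₀ ℕ) := fun p =>
      Finsupp.single 0 (p.1 : ℕ) + Finsupp.single 1 (p.2 : ℕ) with hexponent
    have hinj : Function.Injective exponent := by
      intro p q hpq
      have h0 := DFunLike.congr_fun hpq 0
      have h1 := DFunLike.congr_fun hpq 1
      simp [hexponent] at h0 h1
      exact Prod.ext (Fin.ext h0) (Fin.ext h1)
    have hcoeff : ∀ μ, MvPolynomial.coeff μ (∑ p, MvPolynomial.monomial (exponent p) (ξ p : ℂ)) =
        ∑ p, if exponent p = μ then (ξ p : ℂ) else 0 := by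
      intro μ
      simp [MvPolynomial.coeff_sum, MvPolynomial.coeff_monomial]
    have hzero := halgind (∑ p, MvPolynomial.monomial (exponent p) (ξ p : ℂ))
      (fun μ => by
        rw [hcoeff]
        refine sum_mem fun p _ => ?_
        split_ifs
        exacts [(ξ p).2, K.zero_mem])
      (fun z => by
        rw [map_sum, ← hξ z]
        refine Finset.sum_congr rfl fun p _ => ?_
        rw [MvPolynomial.eval_monomial, Finsupp.prod_fintype _ _ (by simp)]
        simp [hexponent, Fin.prod_univ_two])
    ext p
    have hp := hcoeff (exponent p)
    rw [hzero] at hp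
    simpa [hinj.eq_iff] using hp.symm
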